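/- arXiv:2312.12223 — 3 statements merged into one kernel-verified Lean document; each statement's English description precedes it below -/
import Mathlib

section
/- Let ℝ act additively on a type X, let η : X → Z be an invariant encoder, δ : Z → X a decoder, and ψ : X → ℝ an equivariant and suitable group action estimator. Fix c ∈ X with trivial stabilizer and θ > 0, and let C = {a +ᵥ c : a ∈ [-θ, θ]} be the symmetry class of c with boundary θ. Then the following are equivalent: (i) ψ c = 0; (ii) δ (η s) = c for every s ∈ C; (iii) the image ψ '' C equals the interval [-θ, θ]. -/
/-!
Suitability says that `ψ c` moves the decoded point `δ (η c)` to `c`, and equivariance says that `ψ`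
maps the symmetry class of `c` onto the translate of `[-θ, θ]` by `ψ c`. So each condition asks
that a translation by `ψ c` fix something: the point `c` for (ii), which equivariance excludes
unless `ψ c = 0`, and the interval for (iii), which its supremum excludes unless `ψ c = 0`.
-/

section GroupActionEstimator

variable {G X Z : Type*} {η : X → Z} {δ : Z → X} {ψ : X → G}

theorem image_image_vadd_eq_image_add_right [Add G] [VAdd G X]
    (hequiv : ∀ (a : G) (x : X), ψ (a +ᵥ x) = a + ψ x) (S : Set G) (c : X) :
    ψ '' ((· +ᵥ c) '' S) = (· + ψ c) '' S := by
  simp only [Set.image_image, hequiv]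

theorem forall_mem_image_vadd_decode_encode_eq_iff [VAdd G X]
    (hinv : ∀ (a : G) (x : X), η (a +ᵥ x) = η x) {S : Set G} (hS : S.Nonempty) (c y : X) :
    (∀ s ∈ (· +ᵥ c) '' S, δ (η s) = y) ↔ δ (η c) = y := by
  obtain ⟨a, ha⟩ := hS
  simp only [Set.forall_mem_image, hinv]
  exact ⟨fun h => h ha, fun h _ _ => h⟩

theorem decode_encode_eq_self_iff [AddLeftCancelMonoid G] [AddAction G X]
    (hequiv : ∀ (a : G) (x : X), ψ (a +ᵥ x) = a + ψ x)
    (hsuit : ∀ x : X, ψ x +ᵥ δ (η x) = x) (c : X) :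
    δ (η c) = c ↔ ψ c = 0 := by
  constructor
  · intro hdecode
    have hfix : ψ c +ᵥ c = c := by simpa only [hdecode] using hsuit c
    have hsum : ψ c + ψ c = ψ c := by rw [← hequiv, hfix]
    exact add_eq_left.mp hsum
  · intro hzero
    simpa only [hzero, zero_vadd] using hsuit c

theorem stmt_0_general [AddLeftCancelMonoid G] [AddAction G X]
    (hinv : ∀ (a : G) (x : X), η (a +ᵥ x) = η x)
    (hequiv : ∀ (a : G) (x : X), ψ (a +ᵥ x) = a + ψ x)
    (hsuit : ∀ x : X, ψ x +ᵥ δ (η x) = x)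
    {S : Set G} (hne : S.Nonempty) (hS : ∀ t : G, (· + t) '' S = S → t = 0) (c : X) :
    List.TFAE [ψ c = 0,
      ∀ s ∈ (· +ᵥ c) '' S, δ (η s) = c,
      ψ '' ((· +ᵥ c) '' S) = S] := by
  rw [forall_mem_image_vadd_decode_encode_eq_iff hinv hne,
    image_image_vadd_eq_image_add_right hequiv]
  tfae_have 1 ↔ 2 := (decode_encode_eq_self_iff hequiv hsuit c).symm
  tfae_have 1 → 3 := fun hzero => by simp only [hzero, add_zero, Set.image_id']
  tfae_have 3 → 1 := hS (ψ c)
  tfae_finish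

end GroupActionEstimator

theorem eq_zero_of_image_add_right_eq_of_isLUB {G : Type*} [AddGroup G] [PartialOrder G]
    [AddRightMono G] {S : Set G} {b t : G} (hb : IsLUB S b) (ht : (· + t) '' S = S) : t = 0 := by
  have htranslate : IsLUB ((· + t) '' S) (b + t) := (OrderIso.addRight t).isLUB_image'.mpr hb
  rw [ht] at htranslate
  exact add_eq_left.mp (htranslate.unique hb)

/-- Proposition 1 (uniform symmetries): for an invariant encoder `η`, decoder `δ` and an
equivariant, suitable group action estimator `ψ`, with `c` having trivial stabilizer and
symmetry class `C = {a +ᵥ c : a ∈ [-θ, θ]}`, the three conditions are equivalent. -/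
theorem stmt_0 {X Z : Type*} [AddAction ℝ X]
    (η : X → Z) (δ : Z → X) (ψ : X → ℝ)
    (hinv : ∀ (a : ℝ) (x : X), η (a +ᵥ x) = η x)
    (hequiv : ∀ (a : ℝ) (x : X), ψ (a +ᵥ x) = a + ψ x)
    (hsuit : ∀ x : X, (ψ x) +ᵥ δ (η x) = x)
    (c : X) (hstab : ∀ a : ℝ, a +ᵥ c = c → a = 0)
    (θ : ℝ) (hθ : 0 < θ)
    (C : Set X) (hC : C = {s | ∃ a ∈ Set.Icc (-θ) θ, s = a +ᵥ c}) :
    List.TFAE [ψ c = 0,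
      ∀ s ∈ C, δ (η s) = c,
      ψ '' C = Set.Icc (-θ) θ] := by
  obtain rfl : C = (· +ᵥ c) '' Set.Icc (-θ) θ := by simp only [hC, Set.image, eq_comm]
  have hle : -θ ≤ θ := neg_le_self hθ.le
  exact stmt_0_general hinv hequiv hsuit (Set.nonempty_Icc.mpr hle)
    (fun _ => eq_zero_of_image_add_right_eq_of_isLUB (isLUB_Icc hle)) c
end

section
/- Let ℝ act additively on a type X, let η : X → Z be an invariant encoder, δ : Z → X a decoder, and ψ : X → ℝ an equivariant and suitable group action estimator. Fix c ∈ X with trivial stabilizer, and let S ⊂ ℝ be a finite nonempty set of angles with 0 ∈ S, and C = {a +ᵥ c : a ∈ S}. Then the following are equivalent: (i) ψ c = 0; (ii) δ (η s) = c for every s ∈ C; (iii) the image ψ '' C equals S. -/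
/-!
Suitability and equivariance turn the reconstruction `δ ∘ η` into a retraction of each orbit onto
the unique point at which `ψ` vanishes. Hence all of `C` is reconstructed as one point, which is `c`
exactly when `ψ c = 0`. On the other hand `ψ '' C` is the translate of `S` by `ψ c`, and a finite
nonempty set in a torsion-free group is invariant under no nontrivial translation.
-/

section Translation

variable {G : Type*} [AddLeftCancelMonoid G] [IsAddTorsionFree G] {S : Set G} {g : G}

theorem eq_zero_of_mapsTo_add_right (hfin : S.Finite) (hne : S.Nonempty)
    (hmaps : Set.MapsTo (· + g) S S) : g = 0 := by
  by_contra hg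
  obtain ⟨a, ha⟩ := hne
  have orbit_mem (n : ℕ) : a + n • g ∈ S := by simpa using hmaps.iterate n ha
  have orbit_injective : Function.Injective fun n : ℕ ↦ a + n • g :=
    (add_right_injective a).comp <|
      injective_nsmul_iff_not_isOfFinAddOrder.mpr (not_isOfFinAddOrder_of_isAddTorsionFree hg)
  exact Set.infinite_of_injective_forall_mem orbit_injective orbit_mem hfin

theorem image_add_right_eq_self_iff (hfin : S.Finite) (hne : S.Nonempty) :
    (· + g) '' S = S ↔ g = 0 := by
  constructor
  · intro h
    exact eq_zero_of_mapsTo_add_right hfin hne (Set.mapsTo_iff_image_subset.mpr h.subset)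
  · rintro rfl
    simp

end Translation

theorem image_image_vadd_of_equivariant {G X : Type*} [Add G] [VAdd G X] {ψ : X → G}
    (hequiv : ∀ (a : G) (x : X), ψ (a +ᵥ x) = a + ψ x) (S : Set G) (c : X) :
    ψ '' ((· +ᵥ c) '' S) = (· + ψ c) '' S := by
  simp only [Set.image_image, hequiv]

/-- An equivariant and suitable group action estimator `ψ`. Suitability depends on the encoder `η`
and the decoder `δ` only through the reconstruction `r = δ ∘ η`, so `r` alone is recorded. -/
structure IsGroupActionEstimator {G X : Type*} [Add G] [VAdd G X] (ψ : X → G) (r : X → X) :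
    Prop where
  map_vadd (a : G) (x : X) : ψ (a +ᵥ x) = a + ψ x
  vadd_reconstruct (x : X) : ψ x +ᵥ r x = x

namespace IsGroupActionEstimator

variable {G X : Type*} [AddGroup G] [AddAction G X] {ψ : X → G} {r : X → X}

theorem reconstruct_eq_neg_vadd (h : IsGroupActionEstimator ψ r) (x : X) : r x = -ψ x +ᵥ x :=
  eq_neg_vadd_iff.mpr (h.vadd_reconstruct x)

theorem reconstruct_vadd (h : IsGroupActionEstimator ψ r) (a : G) (x : X) :
    r (a +ᵥ x) = r x :=
  calc
    r (a +ᵥ x) = -(a + ψ x) +ᵥ (a +ᵥ x) := by rw [h.reconstruct_eq_neg_vadd, h.map_vadd]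
    _ = -ψ x +ᵥ x := by rw [neg_add_rev, add_vadd, neg_vadd_vadd]
    _ = r x := (h.reconstruct_eq_neg_vadd x).symm

theorem apply_reconstruct (h : IsGroupActionEstimator ψ r) (x : X) : ψ (r x) = 0 := by
  rw [h.reconstruct_eq_neg_vadd, h.map_vadd, neg_add_cancel]

theorem reconstruct_eq_self_iff (h : IsGroupActionEstimator ψ r) (x : X) :
    r x = x ↔ ψ x = 0 := by
  constructor
  · intro hx
    rw [← hx, h.apply_reconstruct]
  · intro hx
    rw [h.reconstruct_eq_neg_vadd, hx, neg_zero, zero_vadd]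

theorem forall_reconstruct_eq_iff (h : IsGroupActionEstimator ψ r) {S : Set G}
    (hne : S.Nonempty) (c : X) : (∀ s ∈ (· +ᵥ c) '' S, r s = c) ↔ ψ c = 0 := by
  rw [Set.forall_mem_image]
  simp only [h.reconstruct_vadd, h.reconstruct_eq_self_iff]
  exact hne.forall_const

end IsGroupActionEstimator

theorem stmt_5_general {G X Z : Type*} [AddGroup G] [IsAddTorsionFree G] [AddAction G X]
    (η : X → Z) (δ : Z → X) (ψ : X → G)
    (hequiv : ∀ (a : G) (x : X), ψ (a +ᵥ x) = a + ψ x)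
    (hsuit : ∀ x : X, ψ x +ᵥ δ (η x) = x)
    (c : X) (S : Set G) (hfin : S.Finite) (hne : S.Nonempty) :
    List.TFAE [ψ c = 0,
      ∀ s ∈ (· +ᵥ c) '' S, δ (η s) = c,
      ψ '' ((· +ᵥ c) '' S) = S] := by
  have estimator : IsGroupActionEstimator ψ (fun x ↦ δ (η x)) := ⟨hequiv, hsuit⟩
  tfae_have 2 ↔ 1 := estimator.forall_reconstruct_eq_iff hne c
  tfae_have 3 ↔ 1 := by
    rw [image_image_vadd_of_equivariant hequiv]
    exact image_add_right_eq_self_iff hfin hne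
  tfae_finish

/-- Proposition 2 (Gaussian symmetries): with a finite nonempty sample `S` of angles
containing `0`, and class `C = {a +ᵥ c : a ∈ S}`, the three conditions are equivalent. -/
theorem stmt_5 {X Z : Type*} [AddAction ℝ X]
    (η : X → Z) (δ : Z → X) (ψ : X → ℝ)
    (hinv : ∀ (a : ℝ) (x : X), η (a +ᵥ x) = η x)
    (hequiv : ∀ (a : ℝ) (x : X), ψ (a +ᵥ x) = a + ψ x)
    (hsuit : ∀ x : X, (ψ x) +ᵥ δ (η x) = x)
    (c : X) (hstab : ∀ a : ℝ, a +ᵥ c = c → a = 0)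
    (S : Finset ℝ) (hS : S.Nonempty) (h0 : (0 : ℝ) ∈ S)
    (C : Set X) (hC : C = {s | ∃ a ∈ S, s = a +ᵥ c}) :
    List.TFAE [ψ c = 0,
      ∀ s ∈ C, δ (η s) = c,
      ψ '' C = ↑S] := by
  obtain rfl : C = (· +ᵥ c) '' (S : Set ℝ) := by simp only [hC, Set.image, eq_comm, SetLike.mem_coe]
  exact stmt_5_general η δ ψ hequiv hsuit c S S.finite_toSet hS
end

section
/- Let G be a group acting on a type X, let η : X → Z be a G-invariant encoder, δ : Z → X a decoder, and ψ : X → G a G-equivariant and suitable group action estimator. Let S be a subgroup of G, let c₀ ∈ X, let C = {g • c₀ : g ∈ S}, and assume every element of C has trivial stabilizer. Then the following are equivalent: (i) there exists c ∈ C with ψ c = 1; (ii) there exists c ∈ C such that δ (η s) = c for every s ∈ C; (iii) the image ψ '' C equals the carrier of S. -/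
/-!
The class `C` is the orbit of `c₀` under `S`, so by equivariance its image under `ψ` is the orbit
of `ψ c₀` in `G`, a right coset of `S`; such a coset is `S` itself exactly when it contains `1`.
On the other hand `ψ c • δ (η c) = c` and `c` has trivial stabilizer, so `ψ c = 1` means that the
decoder returns `c`, and by invariance of `η` it then returns `c` on all of `C`.
-/

open MulAction

theorem image_orbit_of_map_smul {M α β : Type*} [SMul M α] [SMul M β]
    {f : α → β} (hf : ∀ (m : M) (a : α), f (m • a) = m • f a) (a : α) :
    f '' orbit M a = orbit M (f a) := by
  simp only [orbit, ← Set.range_comp, Function.comp_def, hf]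

theorem map_eq_map_of_mem_orbit {M α β : Type*} [SMul M α] {f : α → β}
    (hf : ∀ (m : M) (a : α), f (m • a) = f a) {a b c : α} (hb : b ∈ orbit M a)
    (hc : c ∈ orbit M a) : f b = f c := by
  obtain ⟨m, rfl⟩ := hb
  obtain ⟨n, rfl⟩ := hc
  exact (hf m a).trans (hf n a).symm

theorem orbit_subgroup_eq_setOf {G α : Type*} [Group G] [MulAction G α] (S : Subgroup G) (a : α) :
    orbit S a = {b | ∃ g ∈ S, b = g • a} := by
  ext b
  simp only [mem_orbit_iff, Subtype.exists, Subgroup.mk_smul, exists_prop, Set.mem_ofPred_eq,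
    eq_comm]

theorem one_mem_orbit_subgroup_iff {G : Type*} [Group G] {S : Subgroup G} {a : G} :
    (1 : G) ∈ orbit S a ↔ orbit S a = S := by
  rw [← orbit_eq_iff, orbit_subgroup_one_eq_self, eq_comm]

theorem eq_one_iff_eq_of_smul_eq {M α : Type*} [Monoid M] [MulAction M α] {m : M} {a b : α}
    (hab : m • a = b) (hb : ∀ n : M, n • b = b → n = 1) : m = 1 ↔ a = b := by
  constructor
  · rintro rfl
    rwa [one_smul] at hab
  · rintro rfl
    exact hb m hab

/-- Proposition 3 (cyclic/discrete symmetries): with `S` a subgroup of `G`, class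
`C = {g • c₀ : g ∈ S}` whose elements all have trivial stabilizer, the three conditions are
equivalent. -/
theorem stmt_7 {G X Z : Type*} [Group G] [MulAction G X]
    (η : X → Z) (δ : Z → X) (ψ : X → G)
    (hinv : ∀ (g : G) (x : X), η (g • x) = η x)
    (hequiv : ∀ (g : G) (x : X), ψ (g • x) = g * ψ x)
    (hsuit : ∀ x : X, (ψ x) • δ (η x) = x)
    (S : Subgroup G) (c₀ : X)
    (C : Set X) (hC : C = {x | ∃ g ∈ S, x = g • c₀})
    (hstab : ∀ c ∈ C, ∀ g : G, g • c = c → g = 1) :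
    List.TFAE [∃ c ∈ C, ψ c = 1,
      ∃ c ∈ C, ∀ s ∈ C, δ (η s) = c,
      ψ '' C = ↑S] := by
  obtain rfl : C = orbit S c₀ := hC.trans (orbit_subgroup_eq_setOf S c₀).symm
  have decode_const {s c : X} (hs : s ∈ orbit S c₀) (hc : c ∈ orbit S c₀) : δ (η s) = δ (η c) :=
    congrArg δ (map_eq_map_of_mem_orbit (fun g : S ↦ hinv g) hs hc)
  tfae_have 1 ↔ 2 := by
    refine exists_congr fun c ↦ and_congr_right fun hc ↦ ?_
    rw [eq_one_iff_eq_of_smul_eq (hsuit c) (hstab c hc)]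
    exact ⟨fun h s hs ↦ (decode_const hs hc).trans h, fun h ↦ h c hc⟩
  tfae_have 1 ↔ 3 := by
    change 1 ∈ ψ '' orbit S c₀ ↔ _
    rw [image_orbit_of_map_smul fun g : S ↦ hequiv g]
    exact one_mem_orbit_subgroup_iff
  tfae_finish
end
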